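/- The polynomial x^7 + 867 x^5 + 68 is irreducible over ℚ, and the field K = ℚ(θ) for θ a root of it is not monogenic. -/

import Mathlib

open NumberField Polynomial

/-!
A ring generated over `ℤ` by one element has at most `p` homomorphisms to `𝔽_p`, so it suffices to
find three homomorphisms `𝓞 K → 𝔽₂`. Write `f = x^(m+2) + a x^m + b` with `m` odd, `a ≡ 3` and
`b ≡ 4` modulo `8`; then `f ≡ x^m (x - 1)²` modulo `2`.

* Every odd residue class modulo `4` contains a root of `f` in `ℤ₂` by Hensel's lemma. The two
  homomorphisms `𝓞 K → ℤ₂ → 𝔽₂` so obtained agree at `θ`, but they differ at the algebraic integer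
  `α = θ^((m+1)/2) (θ - 1) / 2`.
* The Newton polygon of `f` at `2` has a side of slope `-2/m`, so `m` divides the ramification index
  of a prime `P ∋ θ` above `2`. Since `[K : ℚ] = m + 2 < 2 m` for `m ≥ 3`, the residue field of `P`
  is `𝔽₂`, which gives a homomorphism sending `θ` to `0`.
-/

section Generators

variable {A S : Type*} [CommRing A] [CommRing S]

lemma injective_ringHom_apply_of_adjoin_singleton_eq_top {η : A}
    (hη : Algebra.adjoin ℤ {η} = ⊤) : Function.Injective fun φ : A →+* S ↦ φ η := by
  intro φ ψ h
  have hφψ : φ.toIntAlgHom = ψ.toIntAlgHom :=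
    AlgHom.ext_of_adjoin_eq_top hη (by rintro _ rfl; exact h)
  exact RingHom.ext fun x ↦ DFunLike.congr_fun hφψ x

lemma not_exists_adjoin_singleton_eq_top_of_card_lt {ι : Type*} [Fintype ι] [Fintype S]
    {φ : ι → A →+* S} (hφ : Function.Injective φ) (hcard : Fintype.card S < Fintype.card ι) :
    ¬ ∃ η : A, Algebra.adjoin ℤ {η} = ⊤ := by
  rintro ⟨η, hη⟩
  exact hcard.not_ge <| Fintype.card_le_of_injective _ <|
    (injective_ringHom_apply_of_adjoin_singleton_eq_top hη).comp hφ

end Generators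

section Trinomial

variable {R : Type*} [CommRing R] {a b : R} {k n : ℕ}

lemma trinomial_zero_one_eq : trinomial 0 k n b a 1 = X ^ n + C a * X ^ k + C b := by
  rw [trinomial_def, C_1]
  ring

lemma aeval_trinomial_zero_one {A : Type*} [CommRing A] [Algebra R A] (x : A) :
    aeval x (trinomial 0 k n b a 1) = x ^ n + algebraMap R A a * x ^ k + algebraMap R A b := by
  simp [trinomial_zero_one_eq]

lemma irreducible_trinomial_of_dvd [IsDomain R] {p : R} (hk : 0 < k) (hkn : k < n)
    (hp : Prime p) (ha : p ∣ a) (hb : p ∣ b) (hb_sq : ¬ p ^ 2 ∣ b) :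
    Irreducible (trinomial 0 k n b a 1) := by
  have hmonic : (trinomial 0 k n b a 1).Monic := trinomial_monic hk hkn
  have hdegree : (trinomial 0 k n b a 1).degree = (n : WithBot ℕ) := by
    rw [degree_eq_natDegree hmonic.ne_zero, trinomial_natDegree hk hkn one_ne_zero]
  refine irreducible_of_eisenstein_criterion
    ((Ideal.span_singleton_prime hp.ne_zero).2 hp) ?_ ?_ ?_ ?_ hmonic.isPrimitive
  · rw [hmonic.leadingCoeff, Ideal.mem_span_singleton]
    exact hp.not_dvd_one
  · intro i hi
    have hin : i ≠ n := by rintro rfl; exact hi.ne hdegree.symm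
    rw [Ideal.mem_span_singleton]
    simp only [trinomial_def, coeff_add, coeff_C_mul_X_pow, if_neg hin]
    split_ifs <;> simp [ha, hb, dvd_add]
  · rw [hdegree]
    exact_mod_cast hk.trans hkn
  · rwa [trinomial_trailing_coeff' hk hkn, Ideal.span_singleton_pow, Ideal.mem_span_singleton]

end Trinomial

section IntegrallyClosed

lemma minpoly_eq_of_irreducible_of_monic {R S : Type*} [CommRing R] [IsDomain R]
    [IsIntegrallyClosed R] [CommRing S] [IsDomain S] [Algebra R S] [Module.IsTorsionFree R S]
    {F : R[X]} {s : S} (hF : Irreducible F) (hmonic : F.Monic) (hs : aeval s F = 0) :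
    minpoly R s = F := by
  have hint : IsIntegral R s := ⟨F, hmonic, hs⟩
  refine eq_of_monic_of_associated (minpoly.monic hint) hmonic ?_
  exact (hF.dvd_iff.1 (minpoly.isIntegrallyClosed_dvd hint hs)).resolve_left
    (minpoly.not_isUnit R s) |>.symm

lemma dvd_of_sq_add_mul_mul_add_sq_mul_eq_zero {A : Type*} [CommRing A] [IsDomain A]
    [IsIntegrallyClosed A] {c r s y : A} (h : y ^ 2 + c * s * y + c ^ 2 * r = 0) : c ∣ y := by
  obtain rfl | hc := eq_or_ne c 0
  · simpa using h
  let ι := algebraMap A (FractionRing A)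
  have hιc : ι c ≠ 0 := by simpa [ι] using hc
  have hint : IsIntegral A (ι y / ι c) := by
    refine ⟨X ^ 2 + C s * X + C r, by monicity!, ?_⟩
    have hι : ι y ^ 2 + ι c * ι s * ι y + ι c ^ 2 * ι r = 0 := by
      simpa only [map_add, map_mul, map_pow, map_zero] using congrArg ι h
    simp only [eval₂_add, eval₂_mul, eval₂_pow, eval₂_X, eval₂_C]
    change _ + ι s * _ + ι r = 0
    field_simp
    linear_combination hι
  obtain ⟨x, hx⟩ := IsIntegrallyClosed.isIntegral_iff.1 hint
  refine ⟨x, IsFractionRing.injective A (FractionRing A) ?_⟩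
  change ι y = ι (c * x)
  change ι x = _ at hx
  rw [map_mul, hx, mul_div_cancel₀ _ hιc]

lemma two_dvd_pow_mul_sub_one {A : Type*} [CommRing A] [IsDomain A] [IsIntegrallyClosed A]
    {θ c d : A} {k : ℕ} (hθ : θ ^ (2 * k + 1) * (θ ^ 2 + (4 * c + 3)) + 4 * d = 0) :
    2 ∣ θ ^ (k + 1) * (θ - 1) := by
  apply dvd_of_sq_add_mul_mul_add_sq_mul_eq_zero (s := θ ^ (k + 1))
    (r := (c + 1) * θ ^ (2 * k + 2) + d * θ)
  linear_combination θ * hθ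

end IntegrallyClosed

section Ramification

variable {p : ℕ}

lemma dvd_multiplicity_of_pow_mul_eq_pow_mul {M : Type*} [CommMonoidWithZero M]
    [IsCancelMulZero M] {q t u x w : M} {m n : ℕ} (hq : Prime q) (ht : FiniteMultiplicity q t)
    (hx : FiniteMultiplicity q x) (hu : ¬ q ∣ u) (hw : ¬ q ∣ w) (hmn : m.Coprime n)
    (h : t ^ m * u = x ^ n * w) : m ∣ multiplicity q x := by
  have hmul : m * multiplicity q t = n * multiplicity q x := by
    have := congrArg (emultiplicity q) h
    rw [emultiplicity_mul hq, emultiplicity_mul hq, emultiplicity_pow hq, emultiplicity_pow hq,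
      emultiplicity_eq_zero.2 hu, emultiplicity_eq_zero.2 hw,
      ht.emultiplicity_eq_multiplicity, hx.emultiplicity_eq_multiplicity] at this
    exact_mod_cast this
  exact hmn.dvd_of_dvd_mul_left (Dvd.intro _ hmul)

lemma intCast_mem_iff_dvd_of_under_eq {A : Type*} [CommRing A] {P : Ideal A}
    (hP : P.under ℤ = Ideal.span {(p : ℤ)}) {c : ℤ} : (c : A) ∈ P ↔ (p : ℤ) ∣ c := by
  rw [← Ideal.mem_span_singleton, ← hP, Ideal.mem_comap, eq_intCast]

lemma aeval_mem_iff_coeff_zero_mem {R A : Type*} [CommRing R] [CommRing A] [Algebra R A]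
    {P : Ideal A} {θ : A} (hθ : θ ∈ P) (G : R[X]) :
    aeval θ G ∈ P ↔ algebraMap R A (G.coeff 0) ∈ P := by
  have h : aeval θ G = θ * aeval θ G.divX + algebraMap R A (G.coeff 0) := by
    nth_rw 1 [← X_mul_divX_add G]
    rw [map_add, map_mul, aeval_X, aeval_C]
  rw [h, P.add_mem_iff_right (P.mul_mem_right _ hθ)]

lemma pow_dvd_span_natCast_of_pow_mul_aeval_eq {A : Type*} [CommRing A] [IsDedekindDomain A]
    [CharZero A] {P : Ideal A} [P.IsPrime] (hp : p ≠ 0) (hP : P.under ℤ = Ideal.span {(p : ℤ)})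
    {θ : A} (hθ : θ ≠ 0) (hθP : θ ∈ P) {G : ℤ[X]} {w : ℤ} {m n : ℕ}
    (hG : ¬ (p : ℤ) ∣ G.coeff 0) (hw : ¬ (p : ℤ) ∣ w) (hmn : m.Coprime n)
    (h : θ ^ m * aeval θ G = p ^ n * w) : P ^ m ∣ Ideal.span {(p : A)} := by
  have hpP : (p : A) ∈ P := by exact_mod_cast (intCast_mem_iff_dvd_of_under_eq hP).2 dvd_rfl
  have hPprime : Prime P := Ideal.prime_of_isPrime (by rintro rfl; exact hθ hθP) ‹_›
  have finiteMultiplicity {x : A} (hx : x ≠ 0) : FiniteMultiplicity P (Ideal.span {x}) :=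
    .of_prime_left hPprime (by simpa using hx)
  have hp_fin := finiteMultiplicity (Nat.cast_ne_zero.2 hp)
  have hdvd : m ∣ multiplicity P (Ideal.span {(p : A)}) := by
    refine dvd_multiplicity_of_pow_mul_eq_pow_mul (u := Ideal.span {aeval θ G})
      (w := Ideal.span {(w : A)}) hPprime (finiteMultiplicity hθ) hp_fin ?_ ?_ hmn ?_
    · rwa [Ideal.dvd_span_singleton, aeval_mem_iff_coeff_zero_mem hθP, eq_intCast,
        intCast_mem_iff_dvd_of_under_eq hP]
    · rwa [Ideal.dvd_span_singleton, intCast_mem_iff_dvd_of_under_eq hP]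
    · simp only [Ideal.span_singleton_pow, Ideal.span_singleton_mul_span_singleton, h]
  refine pow_dvd_of_le_multiplicity (Nat.le_of_dvd ?_ hdvd)
  exact multiplicity_pos_of_dvd (Ideal.dvd_span_singleton.2 hpP)

lemma exists_ringHom_zmod_ker_eq {A : Type*} [CommRing A] {I : Ideal A} (hp : p.Prime)
    (hI : Nat.card (A ⧸ I) = p) : ∃ φ : A →+* ZMod p, RingHom.ker φ = I := by
  have : Finite (A ⧸ I) := Nat.finite_of_card_ne_zero (hI ▸ hp.ne_zero)
  have := Fintype.ofFinite (A ⧸ I)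
  let e := ZMod.ringEquivOfPrime (A ⧸ I) hp (Nat.card_eq_fintype_card.symm.trans hI)
  refine ⟨e.symm.toRingHom.comp (Ideal.Quotient.mk I), ?_⟩
  ext x
  simp [RingHom.mem_ker, Ideal.Quotient.eq_zero_iff_mem]

end Ramification

section Padic

variable {p : ℕ} [Fact p.Prime]

lemma exists_padicInt_root_of_pow_dvd {F : ℤ[X]} {r : ℤ} {k : ℕ}
    (hF : (p : ℤ) ^ (2 * k + 1) ∣ F.eval r) (hF' : (p : ℤ) ^ k ∣ F.derivative.eval r)
    (hF'_not : ¬ (p : ℤ) ^ (k + 1) ∣ F.derivative.eval r) :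
    ∃ z : ℤ_[p], aeval z F = 0 ∧ (p : ℤ_[p]) ^ (k + 1) ∣ z - r := by
  have hp : (1 : ℝ) < p := by exact_mod_cast (Fact.out : p.Prime).one_lt
  have aeval_intCast (G : ℤ[X]) : aeval (r : ℤ_[p]) G = (G.eval r : ℤ) := by
    simpa using aeval_algebraMap_apply ℤ_[p] r G
  have norm_derivative : ‖aeval (r : ℤ_[p]) F.derivative‖ = (p : ℝ) ^ (-k : ℤ) := by
    rw [aeval_intCast]
    refine le_antisymm (PadicInt.norm_int_le_pow_iff_dvd.2 (by exact_mod_cast hF')) ?_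
    by_contra! hlt
    refine hF'_not ?_
    rw [← PadicInt.norm_int_le_pow_iff_dvd, PadicInt.norm_le_pow_iff_norm_lt_pow_add_one]
    simpa using hlt
  have norm_value : ‖aeval (r : ℤ_[p]) F‖ ≤ (p : ℝ) ^ (-(2 * k + 1 : ℕ) : ℤ) := by
    rw [aeval_intCast]
    exact PadicInt.norm_int_le_pow_iff_dvd.2 (by exact_mod_cast hF)
  have norm_lt : ‖aeval (r : ℤ_[p]) F‖ < ‖aeval (r : ℤ_[p]) F.derivative‖ ^ 2 := by
    refine norm_value.trans_lt ?_
    rw [norm_derivative, ← zpow_natCast, ← zpow_mul]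
    exact zpow_lt_zpow_right₀ hp (by push_cast; lia)
  obtain ⟨z, hz, hzr, -⟩ := hensels_lemma norm_lt
  refine ⟨z, hz, ?_⟩
  rw [← Ideal.mem_span_singleton, ← PadicInt.norm_le_pow_iff_mem_span_pow,
    PadicInt.norm_le_pow_iff_norm_lt_pow_add_one]
  simpa [norm_derivative] using hzr

lemma exists_ringHom_padicInt_coe_apply_eq {K : Type*} [Field K] (ψ : K →+* ℚ_[p]) :
    ∃ φ : 𝓞 K →+* ℤ_[p], ∀ x, (φ x : ℚ_[p]) = ψ x := by
  have mem_subring (x : 𝓞 K) : ψ x ∈ PadicInt.subring p := by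
    have hint : IsIntegral ℤ_[p] (ψ x) := (x.isIntegral_coe.map ψ.toIntAlgHom).tower_top
    obtain ⟨y, hy⟩ := IsIntegrallyClosed.isIntegral_iff.1 hint
    exact hy ▸ y.2
  exact ⟨(ψ.comp (algebraMap (𝓞 K) K)).codRestrict (PadicInt.subring p) mem_subring,
    fun _ ↦ rfl⟩

end Padic

section NumberField

variable {K : Type*} [Field K] [NumberField K]

lemma minpoly_rat_coe_eq_map (θ : 𝓞 K) :
    minpoly ℚ (θ : K) = (minpoly ℤ θ).map (algebraMap ℤ ℚ) := by
  rw [minpoly.isIntegrallyClosed_eq_field_fractions' ℚ θ.isIntegral_coe,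
    RingOfIntegers.minpoly_coe]

lemma exists_powerBasis_gen_eq {θ : K} (hθ : Algebra.adjoin ℚ {θ} = ⊤) :
    ∃ pb : PowerBasis ℚ K, pb.gen = θ :=
  ⟨.ofAdjoinEqTop (Algebra.IsIntegral.isIntegral θ) hθ, by simp⟩

lemma finrank_eq_natDegree_minpoly_int {θ : 𝓞 K} (hθ : Algebra.adjoin ℚ {(θ : K)} = ⊤) :
    Module.finrank ℚ K = (minpoly ℤ θ).natDegree := by
  obtain ⟨pb, hpb⟩ := exists_powerBasis_gen_eq hθ
  rw [pb.finrank, ← pb.natDegree_minpoly, hpb, minpoly_rat_coe_eq_map,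
    (minpoly.monic θ.isIntegral).natDegree_map]

lemma absNorm_span_singleton_eq_natAbs_coeff_zero {θ : 𝓞 K}
    (hθ : Algebra.adjoin ℚ {(θ : K)} = ⊤) :
    (Ideal.span {θ}).absNorm = ((minpoly ℤ θ).coeff 0).natAbs := by
  obtain ⟨pb, hpb⟩ := exists_powerBasis_gen_eq hθ
  have hnorm : Algebra.norm ℤ θ = (-1) ^ pb.dim * (minpoly ℤ θ).coeff 0 := by
    have := Algebra.PowerBasis.norm_gen_eq_coeff_zero_minpoly pb
    rw [hpb, ← Algebra.coe_norm_int, minpoly_rat_coe_eq_map, coeff_map, eq_intCast] at this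
    exact_mod_cast this
  rw [Ideal.absNorm_span_singleton, hnorm, Int.natAbs_mul, Int.natAbs_pow]
  simp

variable {p : ℕ}

lemma exists_ringHom_padicInt_apply_eq_of_aeval_minpoly_eq_zero [Fact p.Prime] {θ : 𝓞 K}
    (hθ : Algebra.adjoin ℚ {(θ : K)} = ⊤) {z : ℤ_[p]} (hz : aeval z (minpoly ℤ θ) = 0) :
    ∃ φ : 𝓞 K →+* ℤ_[p], φ θ = z := by
  obtain ⟨pb, hpb⟩ := exists_powerBasis_gen_eq hθ
  have hz_rat : aeval (z : ℚ_[p]) (minpoly ℚ pb.gen) = 0 := by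
    rw [hpb, minpoly_rat_coe_eq_map, aeval_map_algebraMap]
    exact (aeval_algebraMap_apply ℚ_[p] z _).trans (by rw [hz, map_zero])
  obtain ⟨φ, hφ⟩ := exists_ringHom_padicInt_coe_apply_eq (pb.lift _ hz_rat).toRingHom
  refine ⟨φ, Subtype.ext ?_⟩
  rw [hφ, ← hpb]
  exact pb.lift_gen _ hz_rat

lemma absNorm_eq_of_pow_dvd_span_natCast (hp : p.Prime) {P : Ideal (𝓞 K)} (hP : P ≠ ⊤) {m : ℕ}
    (hdvd : P ^ m ∣ Ideal.span {(p : 𝓞 K)}) (hm : Module.finrank ℚ K < 2 * m) :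
    P.absNorm = p := by
  have absNorm_pow_dvd : P.absNorm ^ m ∣ p ^ Module.finrank ℚ K := by
    have := Ideal.absNorm_dvd_absNorm_of_le (Ideal.le_of_dvd hdvd)
    rwa [map_pow, Ideal.absNorm_span_natCast, RingOfIntegers.rank] at this
  have hm0 : m ≠ 0 := by lia
  obtain ⟨f, -, hf⟩ := (Nat.dvd_prime_pow hp).1 ((dvd_pow_self _ hm0).trans absNorm_pow_dvd)
  have hfm : f * m ≤ Module.finrank ℚ K := by
    rwa [hf, ← pow_mul, Nat.pow_dvd_pow_iff_le_right hp.one_lt] at absNorm_pow_dvd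
  have hf0 : f ≠ 0 := by
    rintro rfl
    exact hP (Ideal.absNorm_eq_one_iff.1 (by simpa using hf))
  have hf1 : f = 1 := by nlinarith [Nat.pos_of_ne_zero hf0]
  rw [hf, hf1, pow_one]

lemma exists_ringHom_zmod_apply_eq_zero_of_minpoly_eq (hp : p.Prime) {θ : 𝓞 K}
    (hgen : Algebra.adjoin ℚ {(θ : K)} = ⊤) {G : ℤ[X]} {w : ℤ} {m n : ℕ}
    (hmin : minpoly ℤ θ = X ^ m * G + C ((p : ℤ) ^ n * w)) (hG : ¬ (p : ℤ) ∣ G.coeff 0)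
    (hw : ¬ (p : ℤ) ∣ w) (hn : n ≠ 0) (hmn : m.Coprime n) (hm : Module.finrank ℚ K < 2 * m) :
    ∃ φ : 𝓞 K →+* ZMod p, φ θ = 0 := by
  have hm0 : m ≠ 0 := by lia
  have hroot : θ ^ m * aeval θ G = p ^ n * (-w : ℤ) := by
    have haeval := hmin ▸ minpoly.aeval ℤ θ
    rw [map_add, map_mul, map_pow, aeval_X, aeval_C, eq_intCast] at haeval
    push_cast at haeval ⊢
    linear_combination haeval
  have hθ : θ ≠ 0 := by
    rintro rfl
    have hw0 : w = 0 := by simpa [hm0, hp.ne_zero] using hroot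
    simp [hw0] at hw
  have dvd_absNorm : p ∣ (Ideal.span {θ}).absNorm := by
    rw [absNorm_span_singleton_eq_natAbs_coeff_zero hgen, hmin, ← Int.natCast_dvd, coeff_add,
      coeff_C_zero, mul_coeff_zero, coeff_X_pow, if_neg hm0.symm, zero_mul, zero_add]
    exact (dvd_pow_self _ hn).mul_right _
  obtain ⟨P, hPmax, hP, hPθ⟩ := Ideal.exists_isMaximal_dvd_of_dvd_absNorm' hp _ dvd_absNorm
  have hθP : θ ∈ P := Ideal.dvd_span_singleton.1 hPθ
  have hPdvd : P ^ m ∣ Ideal.span {(p : 𝓞 K)} :=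
    pow_dvd_span_natCast_of_pow_mul_aeval_eq hp.ne_zero hP hθ hθP hG (by simpa using hw) hmn hroot
  obtain ⟨φ, rfl⟩ := exists_ringHom_zmod_ker_eq hp
    (absNorm_eq_of_pow_dvd_span_natCast hp hPmax.ne_top hPdvd hm)
  exact ⟨φ, hθP⟩

end NumberField

section TrinomialField

lemma exists_padicInt_two_root_trinomial {a b r : ℤ} (ha : a ≡ 3 [ZMOD 8]) (hb : b ≡ 4 [ZMOD 8])
    (hr : Odd r) (k : ℕ) :
    ∃ z : ℤ_[2], aeval z (trinomial 0 (2 * k + 1) (2 * k + 3) b a 1) = 0 ∧ 4 ∣ z - r := by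
  set F := trinomial 0 (2 * k + 1) (2 * k + 3) b a 1 with hF
  have eval_F : F.eval r = r ^ (2 * k + 1) * (r ^ 2 + a) + b := by
    simp only [hF, trinomial_zero_one_eq, eval_add, eval_mul, eval_C, eval_pow, eval_X]
    ring
  have eval_derivative_F :
      F.derivative.eval r = r ^ (2 * k) * ((2 * k + 1) * (r ^ 2 + a) + 2 * r ^ 2) := by
    simp only [hF, trinomial_zero_one_eq, derivative_add, derivative_C_mul, derivative_X_pow,
      derivative_C, eval_add, eval_mul, eval_C, eval_pow, eval_X, eval_zero, Nat.add_sub_cancel]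
    push_cast
    ring
  obtain ⟨c, hc⟩ : ∃ c, r ^ 2 + a = 4 * (2 * c + 1) := by
    obtain ⟨e, he⟩ := Int.eight_dvd_sq_sub_one_of_odd hr
    exact ⟨e + a / 8, by unfold Int.ModEq at ha; lia⟩
  obtain ⟨d, rfl⟩ : ∃ d, b = 4 * (2 * d + 1) := ⟨b / 8, by unfold Int.ModEq at hb; lia⟩
  have odd_cofactor : Odd (r ^ (2 * k) * ((2 * k + 1) * 2 * (2 * c + 1) + r ^ 2)) :=
    hr.pow.mul (((even_two.mul_left _).mul_right _).add_odd hr.pow)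
  have derivative_F_eq : F.derivative.eval r =
      2 * (r ^ (2 * k) * ((2 * k + 1) * 2 * (2 * c + 1) + r ^ 2)) := by
    rw [eval_derivative_F, hc]
    ring
  have eight_dvd : 2 ^ 3 ∣ F.eval r := by
    obtain ⟨q, hq⟩ : Odd (r ^ (2 * k + 1)) := hr.pow
    exact ⟨q * (2 * c + 1) + c + d + 1, by rw [eval_F, hc, hq]; ring⟩
  have two_dvd : 2 ^ 1 ∣ F.derivative.eval r := ⟨_, by rw [derivative_F_eq, pow_one]⟩
  have not_four_dvd : ¬ 2 ^ 2 ∣ F.derivative.eval r := by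
    obtain ⟨o, ho⟩ := odd_cofactor
    rw [derivative_F_eq, ho]
    lia
  obtain ⟨z, hz, hzr⟩ := exists_padicInt_root_of_pow_dvd (p := 2) eight_dvd two_dvd not_four_dvd
  exact ⟨z, hz, by convert hzr using 1; norm_num⟩

lemma toZMod_two_eq_of_two_mul_eq {z y : ℤ_[2]} {s : ℤ} {n : ℕ} (hz : 4 ∣ z - (2 * s + 1 : ℤ))
    (hy : 2 * y = z ^ n * (z - 1)) : z.toZMod = 1 ∧ y.toZMod = s := by
  obtain ⟨w, hw⟩ := hz
  have hz : z = 1 + 2 * (s + 2 * w) := by push_cast at hw; linear_combination hw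
  have hy : y = z ^ n * (s + 2 * w) := by
    refine mul_left_cancel₀ (two_ne_zero (α := ℤ_[2])) ?_
    rw [hy]
    linear_combination z ^ n * hz
  have two_eq_zero : PadicInt.toZMod (2 : ℤ_[2]) = 0 := (map_ofNat _ 2).trans rfl
  have toZMod_z : z.toZMod = 1 := by simp [hz, two_eq_zero]
  exact ⟨toZMod_z, by simp [hy, toZMod_z, two_eq_zero]⟩

variable {K : Type*} [Field K] [NumberField K] {θ α : 𝓞 K} {k : ℕ} {a b : ℤ}

lemma exists_ringHom_zmod_two_apply_eq_one (ha : a ≡ 3 [ZMOD 8]) (hb : b ≡ 4 [ZMOD 8])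
    (hgen : Algebra.adjoin ℚ {(θ : K)} = ⊤)
    (hmin : minpoly ℤ θ = trinomial 0 (2 * k + 1) (2 * k + 3) b a 1)
    (hα : 2 * α = θ ^ (k + 1) * (θ - 1)) (s : ℤ) :
    ∃ φ : 𝓞 K →+* ZMod 2, φ θ = 1 ∧ φ α = s := by
  obtain ⟨z, hz, hzs⟩ := exists_padicInt_two_root_trinomial ha hb (odd_two_mul_add_one s) k
  obtain ⟨φ, rfl⟩ := exists_ringHom_padicInt_apply_eq_of_aeval_minpoly_eq_zero hgen (hmin ▸ hz)
  exact ⟨PadicInt.toZMod.comp φ,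
    toZMod_two_eq_of_two_mul_eq hzs (by simpa [map_ofNat] using congrArg φ hα)⟩

lemma exists_ringHom_zmod_two_apply_eq_zero (ha : Odd a) (hb : b ≡ 4 [ZMOD 8]) (hk : 0 < k)
    (hgen : Algebra.adjoin ℚ {(θ : K)} = ⊤)
    (hmin : minpoly ℤ θ = trinomial 0 (2 * k + 1) (2 * k + 3) b a 1) :
    ∃ φ : 𝓞 K →+* ZMod 2, φ θ = 0 := by
  obtain ⟨d, rfl⟩ : ∃ d, b = 4 * (2 * d + 1) := ⟨b / 8, by unfold Int.ModEq at hb; lia⟩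
  have hfinrank : Module.finrank ℚ K = 2 * k + 3 := by
    rw [finrank_eq_natDegree_minpoly_int hgen, hmin,
      trinomial_natDegree (by lia) (by lia) one_ne_zero]
  refine exists_ringHom_zmod_apply_eq_zero_of_minpoly_eq (G := X ^ 2 + C a) (w := 2 * d + 1)
    (m := 2 * k + 1) (n := 2) Nat.prime_two hgen ?_ ?_ ?_ two_ne_zero (by simp) (by lia)
  · rw [hmin, trinomial_zero_one_eq, mul_add (X ^ _), ← pow_add, X_pow_mul_C]
    norm_num
  · simpa [← even_iff_two_dvd] using ha
  · push_cast; lia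

theorem not_exists_adjoin_singleton_eq_top_of_minpoly_eq_trinomial
    (ha : a ≡ 3 [ZMOD 8]) (hb : b ≡ 4 [ZMOD 8]) (hk : 0 < k)
    (hgen : Algebra.adjoin ℚ {(θ : K)} = ⊤)
    (hmin : minpoly ℤ θ = trinomial 0 (2 * k + 1) (2 * k + 3) b a 1) :
    ¬ ∃ η : 𝓞 K, Algebra.adjoin ℤ {η} = ⊤ := by
  obtain ⟨α, hα⟩ : 2 ∣ θ ^ (k + 1) * (θ - 1) := by
    obtain ⟨c, rfl⟩ : ∃ c, a = 4 * c + 3 := ⟨a / 4, by unfold Int.ModEq at ha; lia⟩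
    obtain ⟨d, rfl⟩ : ∃ d, b = 4 * d := ⟨b / 4, by unfold Int.ModEq at hb; lia⟩
    have hroot := hmin ▸ minpoly.aeval ℤ θ
    rw [aeval_trinomial_zero_one, eq_intCast, eq_intCast] at hroot
    push_cast at hroot
    exact two_dvd_pow_mul_sub_one (c := (c : 𝓞 K)) (d := (d : 𝓞 K)) (by linear_combination hroot)
  obtain ⟨φ₀, hθ₀, hα₀⟩ := exists_ringHom_zmod_two_apply_eq_one ha hb hgen hmin hα.symm 0
  obtain ⟨φ₁, hθ₁, hα₁⟩ := exists_ringHom_zmod_two_apply_eq_one ha hb hgen hmin hα.symm 1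
  have ha_odd : Odd a := by rw [Int.odd_iff]; unfold Int.ModEq at ha; lia
  obtain ⟨φ₂, hθ₂⟩ := exists_ringHom_zmod_two_apply_eq_zero ha_odd hb hk hgen hmin
  have h01 : φ₀ ≠ φ₁ := by rintro rfl; simp [hα₀] at hα₁
  have h02 : φ₀ ≠ φ₂ := by rintro rfl; simp [hθ₀] at hθ₂
  have h12 : φ₁ ≠ φ₂ := by rintro rfl; simp [hθ₁] at hθ₂
  refine not_exists_adjoin_singleton_eq_top_of_card_lt (φ := ![φ₀, φ₁, φ₂]) ?_ (by simp)
  simp [Function.Injective, Fin.forall_fin_succ, h01, h02, h12, h01.symm, h02.symm, h12.symm]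

end TrinomialField

theorem not_monogenic_example_867_68_general {a b p : ℤ} {k : ℕ} (hk : 0 < k)
    (ha : a ≡ 3 [ZMOD 8]) (hb : b ≡ 4 [ZMOD 8]) (hp : Prime p) (hpa : p ∣ a) (hpb : p ∣ b)
    (hpb_sq : ¬ p ^ 2 ∣ b) :
    Irreducible (X ^ (2 * k + 3) + C (a : ℚ) * X ^ (2 * k + 1) + C (b : ℚ)) ∧
    ∀ (K : Type*) [Field K] [NumberField K] (θ : K),
      θ ^ (2 * k + 3) + a * θ ^ (2 * k + 1) + b = 0 → Algebra.adjoin ℚ {θ} = ⊤ →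
      ¬ ∃ η : 𝓞 K, Algebra.adjoin ℤ {η} = ⊤ := by
  have hmonic : (trinomial 0 (2 * k + 1) (2 * k + 3) b a 1).Monic :=
    trinomial_monic (by lia) (by lia)
  have hirr : Irreducible (trinomial 0 (2 * k + 1) (2 * k + 3) b a 1) :=
    irreducible_trinomial_of_dvd (by lia) (by lia) hp hpa hpb hpb_sq
  constructor
  · simpa [trinomial_zero_one_eq] using
      (hmonic.irreducible_iff_irreducible_map_fraction_map (K := ℚ)).1 hirr
  · intro K _ _ θ hθ hgen
    have hroot : aeval θ (trinomial 0 (2 * k + 1) (2 * k + 3) b a 1) = 0 := by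
      simpa [aeval_trinomial_zero_one] using hθ
    obtain ⟨θ, rfl⟩ : ∃ t : 𝓞 K, (t : K) = θ := ⟨⟨θ, _, hmonic, hroot⟩, rfl⟩
    refine not_exists_adjoin_singleton_eq_top_of_minpoly_eq_trinomial ha hb hk hgen
      (minpoly_eq_of_irreducible_of_monic hirr hmonic (RingOfIntegers.ext ?_))
    simpa [aeval_trinomial_zero_one] using hθ

/-- `x^7 + 867 x^5 + 68` is irreducible over `ℚ`, and the septic field it defines is
not monogenic. -/
theorem not_monogenic_example_867_68 :
    Irreducible (X ^ 7 + C (867 : ℚ) * X ^ 5 + C (68 : ℚ)) ∧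
    ∀ (K : Type) [Field K] [NumberField K] (θ : K),
      θ ^ 7 + 867 * θ ^ 5 + 68 = 0 → Algebra.adjoin ℚ {θ} = ⊤ →
      ¬ ∃ η : 𝓞 K, Algebra.adjoin ℤ {η} = ⊤ := by
  exact_mod_cast not_monogenic_example_867_68_general (k := 2) (a := 867) (b := 68) (p := 17)
    two_pos rfl rfl (by norm_num) (by norm_num) (by norm_num) (by norm_num)
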